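/- Weighted derivative estimate for low-frequency projections (Lemma 2.5, estimate (2.9)). Let D ≥ 1 and let R ≥ 16 be dyadic. There exists a constant C = C(D) such that for every measurable φ : ℝ → ℂ with ‖⟨x⟩^{-D} φ‖_{L¹(ℝ)} < ∞, one has ‖ √σ_R · ∂ₓ P_{≤R} φ ‖_{L²(ℝ)} ≤ C ( R ‖ √σ_R · P_{≤R} φ ‖_{L²(ℝ)} + R^{-D} ‖⟨x⟩^{-D} φ‖_{L¹(ℝ)} ). -/

import Mathlib

open MeasureTheory Real Set ENNReal

noncomputable section

/-- The Japanese bracket `⟨x⟩ = √(1 + x²)`. -/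
def jap (x : ℝ) : ℝ := Real.sqrt (1 + x ^ 2)

/-- The inverse Fourier transform `ǧ(x) = (2π)^{-1/2} ∫ g(ξ) e^{i x ξ} dξ`. -/
def invFourier (g : ℝ → ℝ) (x : ℝ) : ℂ :=
  (Real.sqrt (2 * Real.pi) : ℂ)⁻¹ * ∫ ξ : ℝ, (g ξ : ℂ) * Complex.exp (Complex.I * ((x * ξ : ℝ) : ℂ))

/-- `ρ` is an admissible Littlewood–Paley bump function: smooth, `[0,1]`-valued, equal to `1`
on `[-1,1]` and vanishing outside of `[-9/8, 9/8]`. -/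
def IsLPBump (ρ : ℝ → ℝ) : Prop :=
  ContDiff ℝ (⊤ : ℕ∞) ρ ∧ (∀ ξ, ρ ξ ∈ Set.Icc (0 : ℝ) 1) ∧
    (∀ ξ ∈ Set.Icc (-1 : ℝ) 1, ρ ξ = 1) ∧
    ∀ ξ, ξ ∉ Set.Icc (-(9/8) : ℝ) (9/8) → ρ ξ = 0

/-- The symbol `ρ_{≤N}(ξ) = ρ(ξ/N)`. -/
def rhoLE (ρ : ℝ → ℝ) (N : ℝ) (ξ : ℝ) : ℝ := ρ (ξ / N)

open scoped Classical in
/-- The symbol `ρ_N`: `ρ_1 = ρ_{≤1}` and `ρ_N = ρ_{≤N} - ρ_{≤N/2}` for dyadic `N ≥ 2`. -/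
def rhoD (ρ : ℝ → ℝ) (N : ℝ) (ξ : ℝ) : ℝ :=
  if N = 1 then ρ ξ else ρ (ξ / N) - ρ (2 * ξ / N)

/-- The Littlewood–Paley projection `P_{≤N} φ = ρ̌_{≤N} ∗ φ`. -/
def PLE (ρ : ℝ → ℝ) (N : ℝ) (φ : ℝ → ℂ) (x : ℝ) : ℂ :=
  ∫ y : ℝ, invFourier (rhoLE ρ N) y * φ (x - y)

/-- The Littlewood–Paley projection `P_N φ = ρ̌_N ∗ φ`. -/
def PD (ρ : ℝ → ℝ) (N : ℝ) (φ : ℝ → ℂ) (x : ℝ) : ℂ :=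
  ∫ y : ℝ, invFourier (rhoD ρ N) y * φ (x - y)

/-- The weighted norm `‖⟨x⟩^{-D} φ‖_{L¹(ℝ)}`. -/
def wL1 (D : ℝ) (φ : ℝ → ℂ) : ℝ := ∫ x : ℝ, jap x ^ (-D) * ‖φ x‖

/-- The weight `σ_R(x) = exp(-⟨x/R⟩)`. -/
def sigmaW (R x : ℝ) : ℝ := Real.exp (-jap (x / R))

/-- The weighted `L²`-norm `‖√σ_R · f‖_{L²(ℝ)}`. -/
def wSigmaL2 (R : ℝ) (f : ℝ → ℂ) : ℝ≥0∞ :=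
  eLpNorm (fun x => (Real.sqrt (sigmaW R x) : ℂ) * f x) 2 volume

lemma one_le_jap (x : ℝ) : 1 ≤ jap x :=
  Real.one_le_sqrt.2 (by nlinarith [sq_nonneg x])

lemma jap_pos (x : ℝ) : 0 < jap x := zero_lt_one.trans_le (one_le_jap x)

lemma jap_sq (x : ℝ) : jap x ^ 2 = 1 + x ^ 2 := Real.sq_sqrt (by positivity)

lemma continuous_jap : Continuous jap := by unfold jap; fun_prop

lemma jap_neg (x : ℝ) : jap (-x) = jap x := by simp [jap]

lemma abs_le_jap (x : ℝ) : |x| ≤ jap x := Real.abs_le_sqrt (by linarith)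

lemma jap_le_one_add_abs (x : ℝ) : jap x ≤ 1 + |x| := by
  refine Real.sqrt_le_iff.2 ⟨by positivity, ?_⟩
  nlinarith [sq_abs x, abs_nonneg x]

lemma jap_le_jap_of_abs_le {x y : ℝ} (h : |x| ≤ |y|) : jap x ≤ jap y :=
  Real.sqrt_le_sqrt (by linarith [sq_le_sq.2 h])

/-- Peetre's inequality. -/
lemma jap_add_le (x y : ℝ) : jap (x + y) ≤ 2 * jap x * jap y := by
  refine abs_le_of_sq_le_sq' ?_ (by have := jap_pos x; have := jap_pos y; positivity) |>.2
  rw [mul_pow, mul_pow, jap_sq, jap_sq, jap_sq]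
  nlinarith [sq_nonneg (x - y), sq_nonneg (x * y), sq_nonneg x, sq_nonneg y]

lemma jap_rpow_add_le {D : ℝ} (hD : 0 ≤ D) (x y : ℝ) :
    jap (x + y) ^ D ≤ 2 ^ D * jap x ^ D * jap y ^ D := by
  have hx := jap_pos x
  have hy := jap_pos y
  rw [← Real.mul_rpow (by positivity) (by positivity),
    ← Real.mul_rpow (by positivity) (by positivity)]
  exact Real.rpow_le_rpow (jap_pos _).le (jap_add_le x y) hD

lemma jap_rpow_neg_sub_le {D : ℝ} (hD : 0 ≤ D) (x z : ℝ) :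
    jap (x - z) ^ (-D) ≤ 2 ^ D * jap x ^ D * jap z ^ (-D) := by
  have h := jap_rpow_add_le hD x (z - x)
  rw [add_sub_cancel, ← neg_sub x z, jap_neg] at h
  have h1 := Real.rpow_pos_of_pos (jap_pos (x - z)) D
  have h2 := Real.rpow_pos_of_pos (jap_pos z) D
  rw [Real.rpow_neg (jap_pos _).le, Real.rpow_neg (jap_pos _).le, ← div_eq_mul_inv,
    inv_eq_one_div, div_le_div_iff₀ h1 h2]
  linarith

lemma integrable_jap_rpow_neg_two : Integrable fun x => jap x ^ (-2 : ℝ) := by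
  convert integrable_inv_one_add_sq using 2 with x
  rw [Real.rpow_neg (jap_pos x).le, Real.rpow_two, jap_sq]

/-- Rapid decay of Schwartz functions, measured with real powers of the Japanese bracket. -/
lemma SchwartzMap.exists_norm_le_jap_rpow (F : SchwartzMap ℝ ℂ) (M : ℝ) :
    ∃ C : ℝ, 0 < C ∧ ∀ x, ‖F x‖ ≤ C * jap x ^ (-M) := by
  obtain ⟨n, hn⟩ := exists_nat_ge M
  set S := 2 ^ n * ((Finset.Iic (n, 0)).sup fun m => SchwartzMap.seminorm ℝ m.1 m.2) F
  refine ⟨|S| + 1, by positivity, fun x => ?_⟩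
  have h := SchwartzMap.one_add_le_sup_seminorm_apply (𝕜 := ℝ) (m := (n, 0)) le_rfl le_rfl F x
  rw [norm_iteratedFDeriv_zero, Real.norm_eq_abs] at h
  have h1 : jap x ^ M ≤ (1 + |x|) ^ n := by
    rw [← Real.rpow_natCast]
    exact (Real.rpow_le_rpow_of_exponent_le (one_le_jap x) hn).trans
      (Real.rpow_le_rpow (jap_pos x).le (jap_le_one_add_abs x) n.cast_nonneg)
  have h2 := Real.rpow_pos_of_pos (jap_pos x) M
  rw [Real.rpow_neg (jap_pos x).le, ← div_eq_mul_inv, le_div_iff₀ h2, mul_comm]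
  calc jap x ^ M * ‖F x‖ ≤ (1 + |x|) ^ n * ‖F x‖ := by gcongr
    _ ≤ S := h
    _ ≤ |S| + 1 := by linarith [le_abs_self S]

open FourierTransform in
/-- The kernel of `P_{≤R}` is the rescaling of a Schwartz function `G`, and `deriv G` is reproduced
from `G` by convolution with a Schwartz function `H`. -/
lemma IsLPBump.exists_schwartz_kernel {ρ : ℝ → ℝ} (hρ : IsLPBump ρ) :
    ∃ G H : SchwartzMap ℝ ℂ,
      (∀ R : ℝ, 0 < R → ∀ x, invFourier (rhoLE ρ R) x = R * G (R * x)) ∧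
      ∀ x, deriv G x = ∫ t, H t * G (x - t) := by
  obtain ⟨hsm, -, hone, hzero⟩ := hρ
  have hsupp : ∀ c : ℝ, 0 < c → HasCompactSupport fun ξ => (ρ (c * ξ) : ℂ) := by
    intro c hc
    refine HasCompactSupport.intro (isCompact_Icc (a := -(9 / 8) / c) (b := (9 / 8) / c)) ?_
    intro ξ hξ
    rw [hzero, Complex.ofReal_zero]
    contrapose! hξ
    exact ⟨by rw [div_le_iff₀ hc]; linarith [hξ.1], by rw [le_div_iff₀ hc]; linarith [hξ.2]⟩
  have hsmooth : ∀ c : ℝ, ContDiff ℝ (⊤ : ℕ∞) fun ξ => (ρ (c * ξ) : ℂ) := fun c =>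
    Complex.ofRealCLM.contDiff.comp (hsm.comp (contDiff_const.mul contDiff_id))
  have h2π : 0 < 2 * π := by positivity
  let A : SchwartzMap ℝ ℂ := (hsupp (2 * π) h2π).toSchwartzMap (hsmooth _)
  let B : SchwartzMap ℝ ℂ := (hsupp π pi_pos).toSchwartzMap (hsmooth _)
  have hAB : ∀ ξ, B ξ * A ξ = A ξ := by
    intro ξ
    change (ρ (π * ξ) : ℂ) * ρ (2 * π * ξ) = ρ (2 * π * ξ)
    by_cases h : 2 * π * ξ ∈ Set.Icc (-(9 / 8) : ℝ) (9 / 8)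
    · rw [hone (π * ξ) ⟨by linarith [h.1], by linarith [h.2]⟩]
      simp
    · simp [hzero _ h]
  have hderiv : ∀ (F : SchwartzMap ℝ ℂ) (ξ : ℝ),
      𝓕 (SchwartzMap.derivCLM ℂ ℂ F) ξ = (2 * π * Complex.I * ξ) * 𝓕 F ξ := by
    intro F ξ
    have h1 : ⇑(SchwartzMap.derivCLM ℂ ℂ F) = deriv F := by
      ext x; exact SchwartzMap.derivCLM_apply ℂ F x
    have h2 : Integrable (deriv F) := h1 ▸ (SchwartzMap.derivCLM ℂ ℂ F).integrable
    rw [SchwartzMap.fourier_coe, h1, Real.fourier_deriv F.integrable F.differentiable h2,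
      SchwartzMap.fourier_coe]
    rfl
  have hrep : SchwartzMap.derivCLM ℂ ℂ (𝓕⁻ A) = SchwartzMap.convolution
      (ContinuousLinearMap.mul ℂ ℂ) (SchwartzMap.derivCLM ℂ ℂ (𝓕⁻ B)) (𝓕⁻ A) := by
    suffices h : 𝓕 (SchwartzMap.derivCLM ℂ ℂ (𝓕⁻ A)) = 𝓕 (SchwartzMap.convolution
        (ContinuousLinearMap.mul ℂ ℂ) (SchwartzMap.derivCLM ℂ ℂ (𝓕⁻ B)) (𝓕⁻ A)) by
      simpa only [FourierTransform.fourierInv_fourier_eq] using congrArg 𝓕⁻ h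
    ext ξ
    rw [SchwartzMap.fourier_convolution, SchwartzMap.pairing_apply_apply, hderiv, hderiv,
      FourierTransform.fourier_fourierInv_eq, FourierTransform.fourier_fourierInv_eq,
      ContinuousLinearMap.mul_apply', mul_assoc _ (B ξ), hAB]
  set s : ℂ := (Real.sqrt (2 * π) : ℂ)
  have hs : s * s = 2 * π := by
    rw [← Complex.ofReal_mul, Real.mul_self_sqrt h2π.le]; push_cast; rfl
  have hs0 : s ≠ 0 := by
    intro h; rw [h] at hs; simp [pi_ne_zero] at hs
  refine ⟨s • 𝓕⁻ A, SchwartzMap.derivCLM ℂ ℂ (𝓕⁻ B), ?_, ?_⟩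
  · intro R hR x
    rw [_root_.smul_apply, SchwartzMap.fourierInv_coe, Real.fourierInv_eq', invFourier]
    have h := Measure.integral_comp_mul_left
      (fun ξ => (rhoLE ρ R ξ : ℂ) * Complex.exp (Complex.I * ((x * ξ : ℝ) : ℂ))) (2 * π * R)
    have hpos : 0 < (2 * π * R)⁻¹ := by positivity
    rw [abs_of_pos hpos] at h
    have h3 : ∫ v : ℝ, Complex.exp (((2 * π * inner ℝ v (R * x) : ℝ) : ℂ) * Complex.I) • A v =
        ∫ v : ℝ, (rhoLE ρ R (2 * π * R * v) : ℂ) *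
          Complex.exp (Complex.I * ((x * (2 * π * R * v) : ℝ) : ℂ)) := by
      congr 1
      ext v
      have : rhoLE ρ R (2 * π * R * v) = ρ (2 * π * v) := by
        unfold rhoLE; congr 1; field_simp
      rw [this, smul_eq_mul, mul_comm]
      change (ρ (2 * π * v) : ℂ) * _ = _
      congr 2
      simp only [RCLike.inner_apply, conj_trivial]
      push_cast; ring
    rw [h3, h, Complex.real_smul, smul_eq_mul]
    push_cast
    rw [← hs]
    have hR' : (R : ℂ) ≠ 0 := by exact_mod_cast hR.ne'
    field_simp
    exact mul_comm _ _
  · intro x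
    have h1 : deriv (s • 𝓕⁻ A : SchwartzMap ℝ ℂ) x = s * SchwartzMap.derivCLM ℂ ℂ (𝓕⁻ A) x := by
      rw [← SchwartzMap.derivCLM_apply ℂ, map_smul]; rfl
    rw [h1, hrep, SchwartzMap.convolution_apply, convolution_def, ← integral_const_mul]
    congr 1
    ext t
    simp only [ContinuousLinearMap.mul_apply', _root_.smul_apply, smul_eq_mul]
    ring

/-- Young's convolution inequality `L¹ * L² → L²`. -/
lemma eLpNorm_two_lconvolution_le {h u : ℝ → ℝ≥0∞} (hh : Measurable h) (hu : Measurable u) :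
    eLpNorm (fun x => ∫⁻ y, h (x - y) * u y) 2 volume ≤ (∫⁻ t, h t) * eLpNorm u 2 volume := by
  have hsq : ∀ a : ℝ≥0∞, a ^ (1 / 2 : ℝ) * a ^ (1 / 2 : ℝ) = a := by
    intro a
    rw [← ENNReal.rpow_add_of_nonneg _ _ (by norm_num) (by norm_num)]
    norm_num
  have hCS : ∀ x, (∫⁻ y, h (x - y) * u y) ^ 2 ≤ (∫⁻ t, h t) * ∫⁻ y, h (x - y) * u y ^ 2 := by
    intro x
    have hm : Measurable fun y => h (x - y) ^ (1 / 2 : ℝ) := by fun_prop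
    have hH := ENNReal.lintegral_mul_le_Lp_mul_Lq volume Real.HolderConjugate.two_two
      hm.aemeasurable (hm.mul hu).aemeasurable
    simp only [Pi.mul_apply, ← mul_assoc, ENNReal.mul_rpow_of_nonneg _ _ zero_le_two,
      ← ENNReal.rpow_mul] at hH
    norm_num [hsq] at hH
    rw [lintegral_sub_left_eq_self (fun y => h y) x] at hH
    calc _ ≤ _ := pow_le_pow_left' hH 2
      _ = _ := by rw [sq, mul_mul_mul_comm, hsq, hsq]
  have hint : ∫⁻ x, (∫⁻ y, h (x - y) * u y) ^ 2 ≤ (∫⁻ t, h t) ^ 2 * ∫⁻ y, u y ^ 2 := by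
    calc _ ≤ ∫⁻ x, (∫⁻ t, h t) * ∫⁻ y, h (x - y) * u y ^ 2 := lintegral_mono hCS
      _ = (∫⁻ t, h t) * ∫⁻ x, ∫⁻ y, h (x - y) * u y ^ 2 :=
        lintegral_const_mul _ (Measurable.lintegral_prod_right' (f := fun p : ℝ × ℝ =>
          h (p.1 - p.2) * u p.2 ^ 2) (by fun_prop))
      _ = (∫⁻ t, h t) * ∫⁻ y, ∫⁻ x, h (x - y) * u y ^ 2 := by
        rw [lintegral_lintegral_swap]
        exact Measurable.aemeasurable (by fun_prop)
      _ = _ := by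
        have : ∀ y, ∫⁻ x, h (x - y) * u y ^ 2 = (∫⁻ t, h t) * u y ^ 2 := fun y => by
          rw [lintegral_mul_const _ (by fun_prop), lintegral_sub_right_eq_self (fun t => h t) y]
        simp_rw [this]
        rw [lintegral_const_mul _ (by fun_prop), ← mul_assoc, ← sq]
  rw [eLpNorm_eq_lintegral_rpow_enorm_toReal two_ne_zero ENNReal.ofNat_ne_top,
    eLpNorm_eq_lintegral_rpow_enorm_toReal two_ne_zero ENNReal.ofNat_ne_top]
  simp only [ENNReal.toReal_ofNat, enorm_eq_self, ENNReal.rpow_two]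
  calc _ ≤ _ := ENNReal.rpow_le_rpow hint (by norm_num)
    _ = _ := by
      rw [ENNReal.mul_rpow_of_nonneg _ _ (by norm_num), sq,
        ENNReal.mul_rpow_of_nonneg _ _ (by norm_num), hsq]

section Kernel

variable {D : ℝ} {k k' h : ℝ → ℂ} {φ : ℝ → ℂ} {C C' : ℝ}

lemma norm_kernel_mul_le (hD : 0 ≤ D) (hk : ∀ x, ‖k x‖ ≤ C * jap x ^ (-D)) (x z : ℝ) :
    ‖k (x - z) * φ z‖ ≤ C * 2 ^ D * jap x ^ D * (jap z ^ (-D) * ‖φ z‖) := by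
  have hC : 0 ≤ C := by
    have := (norm_nonneg _).trans (hk 0)
    exact nonneg_of_mul_nonneg_left this (Real.rpow_pos_of_pos (jap_pos 0) _)
  rw [norm_mul]
  calc ‖k (x - z)‖ * ‖φ z‖ ≤ C * jap (x - z) ^ (-D) * ‖φ z‖ := by gcongr; exact hk _
    _ ≤ C * (2 ^ D * jap x ^ D * jap z ^ (-D)) * ‖φ z‖ := by
      gcongr; exact jap_rpow_neg_sub_le hD x z
    _ = _ := by ring

lemma integrable_kernel_mul (hD : 0 ≤ D) (hkc : Continuous k)
    (hk : ∀ x, ‖k x‖ ≤ C * jap x ^ (-D)) (hφ : Measurable φ)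
    (hφi : Integrable fun x => jap x ^ (-D) * ‖φ x‖) (x : ℝ) :
    Integrable fun z => k (x - z) * φ z :=
  (hφi.const_mul (C * 2 ^ D * jap x ^ D)).mono'
    (((hkc.comp (continuous_const.sub continuous_id)).measurable.mul hφ).aestronglyMeasurable)
    (.of_forall fun z => norm_kernel_mul_le hD hk x z)

lemma norm_integral_kernel_mul_le (hD : 0 ≤ D) (hk : ∀ x, ‖k x‖ ≤ C * jap x ^ (-D))
    (hφi : Integrable fun x => jap x ^ (-D) * ‖φ x‖) (x : ℝ) :
    ‖∫ z, k (x - z) * φ z‖ ≤ C * 2 ^ D * jap x ^ D * wL1 D φ := by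
  rw [wL1, ← integral_const_mul]
  exact norm_integral_le_of_norm_le (hφi.const_mul _)
    (.of_forall fun z => norm_kernel_mul_le hD hk x z)

lemma hasDerivAt_integral_kernel_mul (hD : 0 ≤ D) (hkc : Continuous k)
    (hk : ∀ x, ‖k x‖ ≤ C * jap x ^ (-D)) (hk'c : Continuous k')
    (hk' : ∀ x, ‖k' x‖ ≤ C' * jap x ^ (-D)) (hkk' : ∀ x, HasDerivAt k (k' x) x)
    (hφ : Measurable φ) (hφi : Integrable fun x => jap x ^ (-D) * ‖φ x‖) (x : ℝ) :
    HasDerivAt (fun x => ∫ z, k (x - z) * φ z) (∫ z, k' (x - z) * φ z) x := by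
  have hC : 0 ≤ C' := by
    have := (norm_nonneg _).trans (hk' 0)
    exact nonneg_of_mul_nonneg_left this (Real.rpow_pos_of_pos (jap_pos 0) _)
  refine (hasDerivAt_integral_of_dominated_loc_of_deriv_le (Metric.ball_mem_nhds x one_pos)
    (.of_forall fun y => (integrable_kernel_mul hD hkc hk hφ hφi y).aestronglyMeasurable)
    (integrable_kernel_mul hD hkc hk hφ hφi x) (F' := fun y z => k' (y - z) * φ z)
    (integrable_kernel_mul hD hk'c hk' hφ hφi x).aestronglyMeasurable
    (bound := fun z => C' * 2 ^ D * (2 + |x|) ^ D * (jap z ^ (-D) * ‖φ z‖))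
    (.of_forall fun z y hy => ?_) (hφi.const_mul _) (.of_forall fun z y _ => ?_)).2
  · refine (norm_kernel_mul_le hD hk' y z).trans ?_
    have hz := Real.rpow_nonneg (jap_pos z).le (-D)
    have hy' : jap y ≤ 2 + |x| := by
      rw [Metric.mem_ball, Real.dist_eq] at hy
      linarith [jap_le_one_add_abs y, abs_sub_abs_le_abs_sub y x]
    have := Real.rpow_le_rpow (jap_pos y).le hy' hD
    gcongr
  · exact ((hkk' (y - z)).comp_sub_const y z).mul_const (φ z)

lemma integral_kernel_comp (hD : 0 ≤ D) (hkc : Continuous k)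
    (hk : ∀ x, ‖k x‖ ≤ C * jap x ^ (-D)) (hhc : Continuous h)
    (hh : ∀ x, ‖h x‖ ≤ C' * jap x ^ (-(D + 2)))
    (hφ : Measurable φ) (hφi : Integrable fun x => jap x ^ (-D) * ‖φ x‖) (x : ℝ) :
    ∫ z, (∫ y, h (x - y) * k (y - z)) * φ z = ∫ y, h (x - y) * ∫ z, k (y - z) * φ z := by
  have hint : Integrable (Function.uncurry fun z y => h (x - y) * (k (y - z) * φ z))
      (volume.prod volume) := by
    refine ((hφi.mul_prod integrable_jap_rpow_neg_two).const_mul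
      (C' * 2 ^ (D + 2) * jap x ^ (D + 2) * (C * 2 ^ D))).mono' ?_ (.of_forall fun p => ?_)
    · refine Measurable.aestronglyMeasurable ?_
      have := hkc.measurable
      have := hhc.measurable
      unfold Function.uncurry
      fun_prop
    · obtain ⟨z, y⟩ := p
      have h1 := norm_kernel_mul_le (φ := fun _ => 1) (by linarith : 0 ≤ D + 2) hh x y
      have h2 := norm_kernel_mul_le (φ := φ) hD hk y z
      simp only [mul_one, norm_one] at h1
      have h3 : jap y ^ (-(D + 2)) * jap y ^ D = jap y ^ (-2 : ℝ) := by
        rw [← Real.rpow_add (jap_pos y)]; congr 1; ring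
      simp only [Function.uncurry_apply_pair]
      rw [norm_mul]
      refine (mul_le_mul h1 h2 (norm_nonneg _) ((norm_nonneg _).trans h1)).trans_eq ?_
      rw [← h3]; ring
  calc _ = ∫ z, ∫ y, h (x - y) * (k (y - z) * φ z) := by
        congr 1; ext z; rw [← integral_mul_const]; congr 1; ext y; ring
    _ = ∫ y, ∫ z, h (x - y) * (k (y - z) * φ z) := integral_integral_swap hint
    _ = _ := by
      congr 1; ext y; rw [integral_const_mul]

end Kernel

lemma jap_le_jap_add_abs_sub (a b : ℝ) : jap a ≤ jap b + |a - b| := by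
  have hb := jap_pos b
  refine Real.sqrt_le_iff.2 ⟨by positivity, ?_⟩
  have h1 : b * (a - b) ≤ jap b * |a - b| :=
    (le_abs_self _).trans (by rw [abs_mul]; gcongr; exact abs_le_jap b)
  nlinarith [jap_sq b, sq_abs (a - b)]

lemma sqrt_sigmaW (R x : ℝ) : Real.sqrt (sigmaW R x) = Real.exp (-jap (x / R) / 2) :=
  (Real.exp_half _).symm

lemma continuous_sqrt_sigmaW (R : ℝ) : Continuous fun x => Real.sqrt (sigmaW R x) := by
  have := continuous_jap
  simp_rw [sqrt_sigmaW]
  fun_prop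

lemma sqrt_sigmaW_le_of_abs_sub_le {R x y : ℝ} (hR : 0 < R) (hxy : |x - y| ≤ R) :
    Real.sqrt (sigmaW R x) ≤ Real.exp (1 / 2) * Real.sqrt (sigmaW R y) := by
  rw [sqrt_sigmaW, sqrt_sigmaW, ← Real.exp_add, Real.exp_le_exp]
  have h := jap_le_jap_add_abs_sub (y / R) (x / R)
  rw [← sub_div, abs_div, abs_of_pos hR, abs_sub_comm] at h
  have : |x - y| / R ≤ 1 := (div_le_one hR).2 hxy
  linarith

lemma exists_sqrt_sigmaW_mul_jap_rpow_le {D : ℝ} (hD : 0 ≤ D) :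
    ∃ C : ℝ, 0 < C ∧ ∀ R x : ℝ, 1 ≤ R →
      Real.sqrt (sigmaW R x) * jap x ^ D ≤ C * R ^ (D + 1) * (jap x)⁻¹ := by
  obtain ⟨n, hn⟩ := exists_nat_ge (D + 1)
  refine ⟨2 ^ n * n.factorial, by positivity, fun R x hR => ?_⟩
  have hx := jap_pos x
  have hR0 : 0 < R := by linarith
  set t := jap (x / R) with ht
  have ht1 : 1 ≤ t := one_le_jap _
  have hxt : jap x ≤ R * t := by
    refine Real.sqrt_le_iff.2 ⟨by positivity, ?_⟩
    rw [mul_pow, ht, jap_sq, div_pow]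
    field_simp
    nlinarith
  have hexp : t ^ (D + 1) ≤ 2 ^ n * n.factorial * Real.exp (t / 2) := by
    have h1 : t ^ (D + 1) ≤ t ^ n := by
      rw [← Real.rpow_natCast]; exact Real.rpow_le_rpow_of_exponent_le ht1 hn
    have h2 := Real.pow_div_factorial_le_exp (t / 2) (by positivity) n
    rw [div_le_iff₀ (by positivity), div_pow, div_le_iff₀ (by positivity)] at h2
    linarith
  have hpow : jap x ^ D = jap x ^ (D + 1) * (jap x)⁻¹ := by
    rw [Real.rpow_add_one hx.ne']; field_simp
  rw [hpow, ← mul_assoc, sqrt_sigmaW, ← ht]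
  refine mul_le_mul_of_nonneg_right ?_ (inv_nonneg.2 hx.le)
  calc Real.exp (-t / 2) * jap x ^ (D + 1) ≤ Real.exp (-t / 2) * (R * t) ^ (D + 1) := by gcongr
    _ = Real.exp (-t / 2) * R ^ (D + 1) * t ^ (D + 1) := by
      rw [Real.mul_rpow hR0.le (by linarith)]; ring
    _ ≤ Real.exp (-t / 2) * R ^ (D + 1) * (2 ^ n * n.factorial * Real.exp (t / 2)) := by gcongr
    _ = (Real.exp (-t / 2) * Real.exp (t / 2)) * (2 ^ n * n.factorial * R ^ (D + 1)) := by ring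
    _ = _ := by rw [← Real.exp_add, neg_div, neg_add_cancel, Real.exp_zero, one_mul]

lemma jap_mul_rpow_neg_le {R M : ℝ} (hR : 1 ≤ R) (hM : 0 ≤ M) (x : ℝ) :
    jap (R * x) ^ (-M) ≤ jap x ^ (-M) := by
  refine Real.rpow_le_rpow_of_nonpos (jap_pos x) (jap_le_jap_of_abs_le ?_) (by linarith)
  rw [abs_mul, abs_of_pos (by linarith : 0 < R)]
  exact le_mul_of_one_le_left (abs_nonneg x) hR

lemma jap_mul_rpow_neg_add_le {R a b x : ℝ} (hR : 1 ≤ R) (ha : 0 ≤ a) (hb : 0 ≤ b)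
    (hx : 1 ≤ |x|) : jap (R * x) ^ (-(a + b)) ≤ R ^ (-a) * jap x ^ (-b) := by
  have hRx : R ≤ jap (R * x) := by
    refine le_trans ?_ (abs_le_jap (R * x))
    rw [abs_mul, abs_of_pos (by linarith : 0 < R)]
    exact le_mul_of_one_le_right (by linarith) hx
  rw [neg_add, Real.rpow_add (jap_pos _)]
  exact mul_le_mul (Real.rpow_le_rpow_of_nonpos (by linarith) hRx (by linarith))
    (jap_mul_rpow_neg_le hR hb x) (Real.rpow_nonneg (jap_pos _).le _)
    (Real.rpow_nonneg (by linarith) _)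

section Representation

variable {ρ : ℝ → ℝ} {G H : SchwartzMap ℝ ℂ} {D R : ℝ} {φ : ℝ → ℂ}

lemma PLE_eq_integral_schwartz
    (hG : ∀ R : ℝ, 0 < R → ∀ x, invFourier (rhoLE ρ R) x = R * G (R * x)) (hR : 0 < R) (x : ℝ) :
    PLE ρ R φ x = ∫ z, (R * G (R * (x - z))) * φ z := by
  rw [PLE, ← integral_sub_left_eq_self _ volume x]
  congr 1
  ext z
  rw [hG R hR, _root_.sub_sub_cancel]

lemma norm_PLE_le {C : ℝ}
    (hG : ∀ R : ℝ, 0 < R → ∀ x, invFourier (rhoLE ρ R) x = R * G (R * x)) (hD : 0 ≤ D)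
    (hC : 0 ≤ C) (hGC : ∀ x, ‖G x‖ ≤ C * jap x ^ (-D)) (hR : 1 ≤ R)
    (hφi : Integrable fun x => jap x ^ (-D) * ‖φ x‖) (x : ℝ) :
    ‖PLE ρ R φ x‖ ≤ R * C * 2 ^ D * jap x ^ D * wL1 D φ := by
  rw [PLE_eq_integral_schwartz hG (by linarith)]
  refine norm_integral_kernel_mul_le (k := fun x => R * G (R * x)) hD (fun x => ?_) hφi x
  rw [norm_mul, Complex.norm_real, Real.norm_of_nonneg (by linarith), mul_assoc]
  have := jap_mul_rpow_neg_le hR hD x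
  gcongr
  exact (hGC _).trans (by gcongr)

/-- The derivative of `P_{≤R} φ` is reproduced from `P_{≤R} φ` by the rescaled kernel `H`. -/
lemma hasDerivAt_PLE
    (hG : ∀ R : ℝ, 0 < R → ∀ x, invFourier (rhoLE ρ R) x = R * G (R * x))
    (hGH : ∀ x, deriv G x = ∫ t, H t * G (x - t)) (hD : 0 ≤ D) (hR : 1 ≤ R)
    (hφ : Measurable φ) (hφi : Integrable fun x => jap x ^ (-D) * ‖φ x‖) (x : ℝ) :
    HasDerivAt (PLE ρ R φ) (∫ y, (R ^ 2 * H (R * (x - y))) * PLE ρ R φ y) x := by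
  have hR0 : 0 < R := by linarith
  have hbound : ∀ (F : SchwartzMap ℝ ℂ) (n : ℕ) (M : ℝ), 0 ≤ M →
      ∃ C, ∀ x, ‖(R : ℂ) ^ n * F (R * x)‖ ≤ C * jap x ^ (-M) := by
    intro F n M hM
    obtain ⟨C, hC, hF⟩ := F.exists_norm_le_jap_rpow M
    refine ⟨R ^ n * C, fun x => ?_⟩
    rw [norm_mul, norm_pow, Complex.norm_real, Real.norm_of_nonneg hR0.le, mul_assoc]
    have := jap_mul_rpow_neg_le hR hM x
    gcongr
    exact (hF _).trans (by gcongr)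
  obtain ⟨C, hk⟩ := hbound G 1 D hD
  obtain ⟨C', hk'⟩ := hbound (SchwartzMap.derivCLM ℂ ℂ G) 2 D hD
  obtain ⟨C'', hh⟩ := hbound H 2 (D + 2) (by linarith)
  simp only [pow_one] at hk
  have hcont : ∀ (F : SchwartzMap ℝ ℂ) (c : ℂ), Continuous fun x : ℝ => c * F (R * x) :=
    fun F c => continuous_const.mul (F.continuous.comp (continuous_const.mul continuous_id))
  have hderiv : ∀ x : ℝ, HasDerivAt (fun x : ℝ => (R : ℂ) * G (R * x))
      ((R : ℂ) ^ 2 * SchwartzMap.derivCLM ℂ ℂ G (R * x)) x := by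
    intro x
    have h1 : HasDerivAt G (SchwartzMap.derivCLM ℂ ℂ G (R * x)) (R * x) := by
      rw [SchwartzMap.derivCLM_apply]
      exact (G.differentiable _).hasDerivAt
    have h2 := (h1.scomp x ((hasDerivAt_id x).const_mul R)).const_mul (R : ℂ)
    refine h2.congr_deriv ?_
    rw [mul_one, Complex.real_smul]; ring
  have hf : PLE ρ R φ = fun x => ∫ z, (R * G (R * (x - z))) * φ z :=
    funext fun x => PLE_eq_integral_schwartz hG hR0 x
  have hd := hasDerivAt_integral_kernel_mul hD (hcont G R) hk
    (hcont (SchwartzMap.derivCLM ℂ ℂ G) (R ^ 2)) hk' hderiv hφ hφi x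
  have hcomp := integral_kernel_comp hD (hcont G R) hk (hcont H (R ^ 2)) hh hφ hφi x
  rw [hf]
  convert hd using 1
  rw [← hcomp]
  congr 1
  ext z
  congr 1
  rw [SchwartzMap.derivCLM_apply, hGH, ← integral_sub_left_eq_self _ volume x]
  have := Measure.integral_comp_mul_left (fun t => H t * G (R * (x - z) - t)) R
  rw [abs_of_pos (inv_pos.2 hR0)] at this
  have hR' : (R : ℂ) ≠ 0 := by exact_mod_cast hR0.ne'
  calc _ = ∫ t : ℝ, (R : ℂ) ^ 3 * (H (R * t) * G (R * (x - z) - R * t)) := by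
        congr 1; ext t
        rw [_root_.sub_sub_cancel, show R * (x - t - z) = R * (x - z) - R * t by ring]
        ring
    _ = _ := by
        rw [integral_const_mul, this, Complex.real_smul]
        push_cast
        field_simp

end Representation

lemma memLp_two_inv_jap : MemLp (fun x => (jap x)⁻¹) 2 volume := by
  refine (memLp_two_iff_integrable_sq ?_).2 ?_
  · exact (continuous_jap.measurable.inv).aestronglyMeasurable
  · convert integrable_jap_rpow_neg_two using 2 with x
    rw [Real.rpow_neg (jap_pos x).le, Real.rpow_two, inv_pow]

/-- **Weighted derivative estimate for low-frequency projections** (Lemma 2.5, estimate (2.9)). -/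
theorem PLE_weighted_deriv_L2 (ρ : ℝ → ℝ) (hρ : IsLPBump ρ) (D : ℝ) (hD : 1 ≤ D) :
    ∃ C : ℝ, 0 < C ∧
      ∀ R : ℝ, 16 ≤ R → (∃ k : ℕ, R = 2 ^ k) →
        ∀ φ : ℝ → ℂ, Measurable φ → Integrable (fun x => jap x ^ (-D) * ‖φ x‖) →
          wSigmaL2 R (deriv (PLE ρ R φ)) ≤
            ENNReal.ofReal C *
              (ENNReal.ofReal R * wSigmaL2 R (PLE ρ R φ) +
                ENNReal.ofReal (R ^ (-D)) * ENNReal.ofReal (wL1 D φ)) := by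
  have hD0 : 0 ≤ D := by linarith
  obtain ⟨G, H, hG, hGH⟩ := hρ.exists_schwartz_kernel
  obtain ⟨CG, hCG, hGC⟩ := G.exists_norm_le_jap_rpow D
  obtain ⟨CH, hCH, hHC⟩ := H.exists_norm_le_jap_rpow ((2 * D + 4) + (D + 2))
  obtain ⟨CW, hCW, hW⟩ := exists_sqrt_sigmaW_mul_jap_rpow_le hD0
  set J : ℝ := ∫ x, jap x ^ (-2 : ℝ)
  have hJ : 0 ≤ J := integral_nonneg fun x => Real.rpow_nonneg (jap_pos x).le _
  set L : ℝ := ∫ x, ‖H x‖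
  have hL : 0 ≤ L := integral_nonneg fun x => norm_nonneg _
  obtain ⟨E, hE⟩ : ∃ E : NNReal, eLpNorm (fun x => (jap x)⁻¹) 2 volume = E :=
    ⟨_, (ENNReal.coe_toNNReal memLp_two_inv_jap.eLpNorm_ne_top).symm⟩
  set K : ℝ := CW * CH * CG * 2 ^ D * 2 ^ D
  have hK : 0 ≤ K := by positivity
  refine ⟨Real.exp (1 / 2) * L + K * J * E + 1, by positivity, ?_⟩
  intro R hR16 _ φ hφ hφi
  have hR : 1 ≤ R := by linarith
  have hR0 : 0 < R := by linarith
  set w := wL1 D φ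
  have hw : 0 ≤ w := integral_nonneg fun x =>
    mul_nonneg (Real.rpow_nonneg (jap_pos x).le _) (norm_nonneg _)
  set f := PLE ρ R φ
  have hder : ∀ x, HasDerivAt f (∫ y, (R ^ 2 * H (R * (x - y))) * f y) x :=
    hasDerivAt_PLE hG hGH hD0 hR hφ hφi
  have hfc : Continuous f := continuous_iff_continuousAt.2 fun x => (hder x).continuousAt
  have hfb : ∀ y, ‖f y‖ ≤ R * CG * 2 ^ D * jap y ^ D * w :=
    norm_PLE_le hG hD0 hCG.le hGC hR hφi
  have hhm : Continuous fun t : ℝ => (R : ℂ) ^ 2 * H (R * t) :=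
    continuous_const.mul (H.continuous.comp (continuous_const.mul continuous_id))
  set Q : ℝ := K * R ^ (-D) * w
  have hQ : 0 ≤ Q := by positivity
  set g : ℝ → ℂ := fun y => (Real.sqrt (sigmaW R y) : ℂ) * f y
  have hgc : Continuous g := (Complex.continuous_ofReal.comp (continuous_sqrt_sigmaW R)).mul hfc
  have hpt : ∀ x y, ‖(Real.sqrt (sigmaW R x) : ℂ) * ((R ^ 2 * H (R * (x - y))) * f y)‖ ≤
      Real.exp (1 / 2) * ‖(R : ℂ) ^ 2 * H (R * (x - y))‖ * ‖g y‖ +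
        Q * (jap x)⁻¹ * jap (x - y) ^ (-2 : ℝ) := by
    intro x y
    have hx := jap_pos x
    have hxy := jap_pos (x - y)
    have hg : ‖g y‖ = Real.sqrt (sigmaW R y) * ‖f y‖ := by
      simp only [g, norm_mul, Complex.norm_real, Real.norm_of_nonneg (Real.sqrt_nonneg _)]
    rw [norm_mul, norm_mul _ (f y), Complex.norm_real, Real.norm_of_nonneg (Real.sqrt_nonneg _), hg]
    rcases le_or_gt |x - y| R with hnear | hfar
    · have h1 := sqrt_sigmaW_le_of_abs_sub_le hR0 hnear
      calc _ ≤ (Real.exp (1 / 2) * Real.sqrt (sigmaW R y)) *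
            (‖(R : ℂ) ^ 2 * H (R * (x - y))‖ * ‖f y‖) := by gcongr
        _ = Real.exp (1 / 2) * ‖(R : ℂ) ^ 2 * H (R * (x - y))‖ *
            (Real.sqrt (sigmaW R y) * ‖f y‖) + 0 := by ring
        _ ≤ _ := by gcongr; positivity
    · have h1 : ‖(R : ℂ) ^ 2 * H (R * (x - y))‖ ≤
          R ^ 2 * (CH * (R ^ (-(2 * D + 4)) * jap (x - y) ^ (-(D + 2)))) := by
        rw [norm_mul, norm_pow, Complex.norm_real, Real.norm_of_nonneg hR0.le]
        have := jap_mul_rpow_neg_add_le (a := 2 * D + 4) (b := D + 2) hR (by linarith)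
          (by linarith) (hR.trans hfar.le)
        gcongr
        exact (hHC _).trans (by gcongr)
      have h2 : ‖f y‖ ≤ R * CG * 2 ^ D * (2 ^ D * jap x ^ D * jap (x - y) ^ D) * w := by
        refine (hfb y).trans ?_
        have := jap_rpow_add_le hD0 x (y - x)
        rw [add_sub_cancel, ← neg_sub x y, jap_neg] at this
        gcongr
      have hexp : R ^ (D + 1) * (R ^ 2 * R ^ (-(2 * D + 4)) * R) = R ^ (-D) := by
        rw [← Real.rpow_natCast R 2, ← Real.rpow_add hR0, ← Real.rpow_add_one hR0.ne',
          ← Real.rpow_add hR0]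
        congr 1; push_cast; ring
      have hexp' : jap (x - y) ^ (-(D + 2)) * jap (x - y) ^ D = jap (x - y) ^ (-2 : ℝ) := by
        rw [← Real.rpow_add hxy]; congr 1; ring
      calc _ ≤ Real.sqrt (sigmaW R x) *
            (R ^ 2 * (CH * (R ^ (-(2 * D + 4)) * jap (x - y) ^ (-(D + 2)))) *
              (R * CG * 2 ^ D * (2 ^ D * jap x ^ D * jap (x - y) ^ D) * w)) := by gcongr
        _ = (Real.sqrt (sigmaW R x) * jap x ^ D) * (CH * CG * 2 ^ D * 2 ^ D * w *
            (R ^ 2 * R ^ (-(2 * D + 4)) * R) *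
            (jap (x - y) ^ (-(D + 2)) * jap (x - y) ^ D)) := by ring
        _ ≤ (CW * R ^ (D + 1) * (jap x)⁻¹) * (CH * CG * 2 ^ D * 2 ^ D * w *
            (R ^ 2 * R ^ (-(2 * D + 4)) * R) *
            (jap (x - y) ^ (-(D + 2)) * jap (x - y) ^ D)) :=
          mul_le_mul_of_nonneg_right (hW R x hR) (by positivity)
        _ = K * (R ^ (D + 1) * (R ^ 2 * R ^ (-(2 * D + 4)) * R)) * w * (jap x)⁻¹ *
            (jap (x - y) ^ (-(D + 2)) * jap (x - y) ^ D) := by ring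
        _ = Q * (jap x)⁻¹ * jap (x - y) ^ (-2 : ℝ) := by rw [hexp, hexp']
        _ ≤ _ := le_add_of_nonneg_left (by positivity)
  set h : ℝ → ℝ≥0∞ := fun t => ENNReal.ofReal (Real.exp (1 / 2) * ‖(R : ℂ) ^ 2 * H (R * t)‖)
  have hh : Measurable h := by
    have := hhm.norm
    exact (by fun_prop : Continuous fun t : ℝ =>
      Real.exp (1 / 2) * ‖(R : ℂ) ^ 2 * H (R * t)‖).measurable.ennreal_ofReal
  have hhint : ∫⁻ t, h t = ENNReal.ofReal (Real.exp (1 / 2) * (R * L)) := by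
    have hHi : Integrable fun t : ℝ => ‖(R : ℂ) ^ 2 * H (R * t)‖ :=
      ((H.integrable.comp_mul_left' hR0.ne').const_mul _).norm
    rw [← ofReal_integral_eq_lintegral_ofReal (hHi.const_mul _)
      (.of_forall fun t => by positivity), integral_const_mul]
    simp_rw [norm_mul]
    rw [integral_const_mul, Measure.integral_comp_mul_left (fun t => ‖H t‖) R, norm_pow,
      Complex.norm_real, Real.norm_of_nonneg hR0.le, abs_of_pos (inv_pos.2 hR0), smul_eq_mul]
    congr 2
    field_simp
    rfl
  have hbd : ∀ x, ‖(Real.sqrt (sigmaW R x) : ℂ) * deriv f x‖ₑ ≤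
      (∫⁻ y, h (x - y) * ‖g y‖ₑ) + ENNReal.ofReal (Q * J) * ‖(jap x)⁻¹‖ₑ := by
    intro x
    have hx := jap_pos x
    rw [(hder x).deriv, ← integral_const_mul]
    have hJx : ∫⁻ y, ENNReal.ofReal (Q * (jap x)⁻¹ * jap (x - y) ^ (-2 : ℝ)) =
        ENNReal.ofReal (Q * J) * ‖(jap x)⁻¹‖ₑ := by
      rw [lintegral_sub_left_eq_self (fun t => ENNReal.ofReal (Q * (jap x)⁻¹ * jap t ^ (-2 : ℝ))) x,
        ← ofReal_integral_eq_lintegral_ofReal (integrable_jap_rpow_neg_two.const_mul _)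
          (.of_forall fun t => by have := jap_pos t; positivity),
        integral_const_mul, Real.enorm_eq_ofReal (by positivity),
        ← ENNReal.ofReal_mul (by positivity)]
      congr 1; ring
    rw [← hJx, ← lintegral_add_left (by fun_prop)]
    refine (enorm_integral_le_lintegral_enorm _).trans (lintegral_mono fun y => ?_)
    have hxy := jap_pos (x - y)
    simp only [h]
    rw [← ofReal_norm, ← ofReal_norm, ← ENNReal.ofReal_mul (by positivity),
      ← ENNReal.ofReal_add (by positivity) (by positivity)]
    exact ENNReal.ofReal_le_ofReal (hpt x y)
  have hgm : Measurable fun y => ‖g y‖ₑ := hgc.measurable.enorm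
  have hNm : Measurable fun x => ∫⁻ y, h (x - y) * ‖g y‖ₑ :=
    Measurable.lintegral_prod_right' (f := fun p : ℝ × ℝ => h (p.1 - p.2) * ‖g p.2‖ₑ)
      ((hh.comp (measurable_fst.sub measurable_snd)).mul (hgm.comp measurable_snd))
  have hJm : Measurable fun x => ‖(jap x)⁻¹‖ₑ := continuous_jap.measurable.inv.enorm
  have hmain : wSigmaL2 R (deriv f) ≤
      ENNReal.ofReal (Real.exp (1 / 2) * (R * L)) * wSigmaL2 R f +
        ENNReal.ofReal (Q * J) * E := by
    calc wSigmaL2 R (deriv f)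
        ≤ eLpNorm ((fun x => ∫⁻ y, h (x - y) * ‖g y‖ₑ) +
            fun x => ENNReal.ofReal (Q * J) * ‖(jap x)⁻¹‖ₑ) 2 volume :=
          eLpNorm_mono_enorm fun x => by simpa only [enorm_eq_self, Pi.add_apply] using hbd x
      _ ≤ eLpNorm (fun x => ∫⁻ y, h (x - y) * ‖g y‖ₑ) 2 volume +
            eLpNorm (fun x => ENNReal.ofReal (Q * J) * ‖(jap x)⁻¹‖ₑ) 2 volume :=
          eLpNorm_add_le hNm.aestronglyMeasurable
            (hJm.const_mul _).aestronglyMeasurable one_le_two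
      _ ≤ _ := by
          gcongr
          · rw [← hhint]
            refine (eLpNorm_two_lconvolution_le hh hgm).trans_eq ?_
            rw [eLpNorm_enorm]
            rfl
          · rw [← hE]
            exact eLpNorm_le_mul_eLpNorm_of_ae_le_mul'' 2
              continuous_jap.measurable.inv.aestronglyMeasurable
              (.of_forall fun x => (enorm_eq_self _).le)
  refine hmain.trans ?_
  have hC1 : Real.exp (1 / 2) * L ≤ Real.exp (1 / 2) * L + K * J * E + 1 := by
    have : 0 ≤ K * J * E := by positivity
    linarith
  have hC2 : K * J * E ≤ Real.exp (1 / 2) * L + K * J * E + 1 := by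
    have : 0 ≤ Real.exp (1 / 2) * L := by positivity
    linarith
  rw [mul_add]
  gcongr ?_ + ?_
  · rw [← mul_assoc (ENNReal.ofReal _) (ENNReal.ofReal R), ← ENNReal.ofReal_mul (by positivity)]
    refine mul_le_mul_left (ENNReal.ofReal_le_ofReal ?_) _
    calc _ = Real.exp (1 / 2) * L * R := by ring
      _ ≤ _ := by gcongr
  · rw [← ENNReal.ofReal_coe_nnreal, ← ENNReal.ofReal_mul (by positivity),
      ← ENNReal.ofReal_mul (by positivity), ← ENNReal.ofReal_mul (by positivity)]
    refine ENNReal.ofReal_le_ofReal ?_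
    change K * R ^ (-D) * w * J * E ≤ _
    calc _ = K * J * E * (R ^ (-D) * w) := by ring
      _ ≤ _ := by gcongr
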